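/- For every integer n ≥ 3, the number of distinct prime factors of n satisfies omega(n) < 1.3841 * log(n) / log(log(n)). -/

import Mathlib

open Finset

/-- Beyond `36`, at most a third of the integers below `m` are prime. -/
theorem three_mul_count_prime_le {m : ℕ} (hm : 36 ≤ m) : 3 * Nat.count Nat.Prime (m + 1) ≤ m := by
  induction m using Nat.strong_induction_on with
  | _ m ih =>
    by_cases h : m < 42
    · interval_cases m <;> simp [Nat.count_succ] <;> norm_num
    · obtain ⟨l, rfl⟩ : ∃ l, m = l + 6 := ⟨m - 6, by omega⟩
      have hl := ih l (by omega) (by omega)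
      have hadd : Nat.count Nat.Prime (l + 1 + 6) ≤ Nat.count Nat.Prime (l + 1) + 2 := by
        rw [Nat.count_eq_card_filter_range, Nat.count_eq_card_filter_range, range_eq_Ico,
          range_eq_Ico, ← Ico_union_Ico_eq_Ico (Nat.zero_le (l + 1)) le_self_add, filter_union]
        refine (card_union_le _ _).trans (Nat.add_le_add_left ?_ _)
        have htot : Nat.totient 6 = 2 := by decide
        rw [← htot, ← Nat.filter_coprime_Ico_eq_totient 6 (l + 1)]
        refine card_le_card fun p hp => ?_
        rw [mem_filter] at hp ⊢
        refine ⟨hp.1, Nat.Coprime.symm ?_⟩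
        exact Nat.coprime_of_lt_prime (by norm_num) (by have := (mem_Ico.1 hp.1).1; omega) hp.2
      rw [show l + 6 + 1 = l + 1 + 6 by ring]
      omega

theorem three_mul_succ_le_nth_prime {k : ℕ} (hk : 11 ≤ k) :
    3 * (k + 1) ≤ Nat.nth Nat.Prime k := by
  have hcount : Nat.count Nat.Prime (Nat.nth Nat.Prime k + 1) = k + 1 := by
    rw [Nat.count_succ, if_pos (Nat.prime_nth_prime k),
      Nat.count_nth_of_infinite Nat.infinite_setOfPred_prime]
  have h36 : 36 ≤ Nat.nth Nat.Prime k := by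
    by_contra! h
    have h1 := Nat.count_monotone Nat.Prime (show Nat.nth Nat.Prime k + 1 ≤ 37 by omega)
    have h37 : Nat.count Nat.Prime 37 = 11 := by decide
    omega
  simpa [hcount] using three_mul_count_prime_le h36

/-- A product of `k` distinct primes is at least the product of the first `k` primes. -/
theorem prod_nth_prime_le_prod (s : Finset ℕ) (hs : ∀ p ∈ s, p.Prime) :
    ∏ i ∈ range s.card, Nat.nth Nat.Prime i ≤ ∏ p ∈ s, p := by
  induction s using Finset.induction_on_max with
  | empty => simp
  | insert a s hlt ih =>
    have ha : a ∉ s := fun h => (hlt a h).false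
    rw [card_insert_of_notMem ha, prod_range_succ, prod_insert ha, mul_comm a]
    refine Nat.mul_le_mul (ih fun p hp => hs p (mem_insert_of_mem hp)) ?_
    refine Nat.lt_succ_iff.1 (Nat.nth_lt_of_lt_count ?_)
    rw [Nat.count_eq_card_filter_range, Nat.lt_iff_add_one_le, ← card_insert_of_notMem ha]
    refine card_le_card fun p hp => mem_filter.2 ⟨mem_range.2 ?_, hs p hp⟩
    rcases mem_insert.1 hp with rfl | h
    · exact Nat.lt_succ_self _
    · exact (hlt p h).trans (Nat.lt_succ_self _)

theorem prod_nth_prime_le_of_card_primeFactors {n : ℕ} (hn : n ≠ 0) :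
    ∏ i ∈ range n.primeFactors.card, Nat.nth Nat.Prime i ≤ n :=
  (prod_nth_prime_le_prod _ fun _ => Nat.prime_of_mem_primeFactors).trans
    (Nat.le_of_dvd (Nat.pos_of_ne_zero hn) (Nat.prod_primeFactors_dvd n))

theorem Real.log_le_log_add_div_sub_one {t x : ℝ} (ht : 0 < t) (hx : 0 < x) :
    Real.log x ≤ Real.log t + x / t - 1 := by
  have h := Real.log_le_sub_one_of_pos (div_pos hx ht)
  rw [Real.log_div hx.ne' ht.ne'] at h
  linarith

theorem nth_prime_eq {k p : ℕ} (hp : p.Prime) (h : Nat.count Nat.Prime p = k) :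
    Nat.nth Nat.Prime k = p := h ▸ Nat.nth_count hp

theorem nth_prime_small : Nat.nth Nat.Prime 0 = 2 ∧ Nat.nth Nat.Prime 1 = 3 ∧
    Nat.nth Nat.Prime 2 = 5 ∧ Nat.nth Nat.Prime 3 = 7 ∧ Nat.nth Nat.Prime 4 = 11 ∧
    Nat.nth Nat.Prime 5 = 13 ∧ Nat.nth Nat.Prime 6 = 17 ∧ Nat.nth Nat.Prime 7 = 19 ∧
    Nat.nth Nat.Prime 8 = 23 ∧ Nat.nth Nat.Prime 9 = 29 ∧ Nat.nth Nat.Prime 10 = 31 := by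
  refine ⟨?_, ?_, ?_, ?_, ?_, ?_, ?_, ?_, ?_, ?_, ?_⟩ <;>
    exact nth_prime_eq (by norm_num) (by decide)

theorem mul_log_le_log_prod_nth_prime {k : ℕ} (hk : 11 ≤ k) :
    k * (Real.log k - 0.043) ≤ Real.log (∏ i ∈ range k, Nat.nth Nat.Prime i : ℕ) := by
  induction k, hk using Nat.le_induction with
  | base =>
    obtain ⟨h0, h1, h2, h3, h4, h5, h6, h7, h8, h9, h10⟩ := nth_prime_small
    have hP : ∏ i ∈ range 11, Nat.nth Nat.Prime i = 200560490130 := by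
      simp [prod_range_succ, h0, h1, h2, h3, h4, h5, h6, h7, h8, h9, h10]
    rw [hP]
    have hexp := Real.add_one_le_exp (0.473 : ℝ)
    have hle : (11 : ℝ) ^ 11 ≤ 200560490130 * Real.exp 0.473 := by
      calc (11 : ℝ) ^ 11 ≤ 200560490130 * (0.473 + 1) := by norm_num
        _ ≤ _ := by gcongr
    have hlog := Real.log_le_log (by positivity) hle
    rw [Real.log_pow, Real.log_mul (by norm_num) (Real.exp_pos _).ne', Real.log_exp] at hlog
    push_cast at hlog ⊢
    linarith
  | succ k hk ih =>
    have hk0 : (0 : ℝ) < k := by positivity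
    have hprod : (0 : ℝ) < (∏ i ∈ range k, Nat.nth Nat.Prime i : ℕ) := by
      exact_mod_cast prod_pos fun i _ => (Nat.prime_nth_prime i).pos
    have hnth : (3 * (k + 1) : ℝ) ≤ Nat.nth Nat.Prime k := by
      exact_mod_cast three_mul_succ_le_nth_prime hk
    have hlog := Real.log_le_log (by positivity) hnth
    rw [Real.log_mul (by norm_num) (by positivity)] at hlog
    have hthree : 0.957 ≤ Real.log 3 :=
      (Real.le_log_iff_exp_le (by norm_num)).2
        ((Real.exp_le_exp.2 (by norm_num)).trans (Real.exp_one_lt_d9.le.trans (by norm_num)))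
    rw [prod_range_succ, Nat.cast_mul, Real.log_mul hprod.ne' (by
      exact_mod_cast (Nat.prime_nth_prime k).ne_zero)]
    have hstep := Real.log_le_log_add_div_sub_one hk0 (show (0 : ℝ) < k + 1 by positivity)
    have hmul : k * Real.log (k + 1) ≤ k * Real.log k + 1 := by
      calc k * Real.log (k + 1) ≤ k * (Real.log k + (k + 1) / k - 1) := by gcongr
        _ = k * Real.log k + 1 := by field_simp; ring
    push_cast at ih ⊢
    linarith

theorem neg_one_sub_log_lt : -1 - Real.log 0.3841 < -0.043 := by
  have h : (0.3841 : ℝ)⁻¹ < Real.exp 0.957 :=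
    lt_of_lt_of_le (by norm_num [sum_range_succ, Nat.factorial])
      (Real.sum_le_exp_of_nonneg (by norm_num) 9)
  have hlog := Real.log_lt_log (by norm_num) h
  rw [Real.log_inv, Real.log_exp] at hlog
  linarith

theorem mul_log_lt_of_large {k : ℕ} (hk : 11 ≤ k) {x : ℝ} (hx : k * (Real.log k - 0.043) ≤ x) :
    k * Real.log x < 1.3841 * x := by
  have hk0 : (11 : ℝ) ≤ k := by exact_mod_cast hk
  have hexp := Real.exp_one_lt_d9
  have hlogk : 1 ≤ Real.log k := (Real.le_log_iff_exp_le (by linarith)).2 (by linarith)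
  have hx0 : 0 < x := lt_of_lt_of_le (mul_pos (by linarith) (by linarith)) hx
  have htangent := Real.log_le_log_add_div_sub_one (show (0 : ℝ) < k / 0.3841 by positivity) hx0
  rw [Real.log_div (by positivity) (by norm_num)] at htangent
  calc k * Real.log x ≤ k * (Real.log k - Real.log 0.3841 + x / (k / 0.3841) - 1) := by gcongr
    _ = k * (Real.log k + (-1 - Real.log 0.3841)) + 0.3841 * x := by field_simp; ring
    _ < k * (Real.log k + -0.043) + 0.3841 * x := by
      gcongr
      exact neg_one_sub_log_lt
    _ ≤ 1.3841 * x := by linarith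

theorem mul_log_lt_of_lt_exp {k t x : ℝ} (hk : 0 < k) (ht : k ≤ 1.3841 * t) (htx : t ≤ x)
    (hexp : t < Real.exp (1.3841 * t / k)) : k * Real.log x < 1.3841 * x := by
  have ht0 : 0 < t := by linarith
  have hlog := Real.log_le_log_add_div_sub_one ht0 (ht0.trans_le htx)
  have hlt := (Real.log_lt_iff_lt_exp ht0).2 hexp
  calc k * Real.log x < k * (1.3841 * t / k + x / t - 1) := by gcongr; linarith
    _ = 1.3841 * t + k / t * (x - t) := by field_simp; ring
    _ ≤ 1.3841 * t + 1.3841 * (x - t) := by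
      gcongr
      exact (div_le_iff₀ ht0).2 ht
    _ = 1.3841 * x := by ring

theorem exp_natCast_add_le {a : ℕ} {f : ℝ} (hf : 0 ≤ f) (hf' : f ≤ 1) :
    Real.exp (a + f) ≤ 2.7182818286 ^ a *
      (∑ m ∈ range 8, f ^ m / m.factorial + f ^ 8 * ((8 : ℕ) + 1) / ((8).factorial * (8 : ℕ))) := by
  rw [Real.exp_add, ← Real.exp_one_pow]
  gcongr
  · exact Real.exp_one_lt_d9.le
  · exact Real.exp_bound' hf hf' (by norm_num)

theorem le_exp_natCast_add {a : ℕ} {f : ℝ} (hf : 0 ≤ f) :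
    2.7182818283 ^ a * ∑ m ∈ range 8, f ^ m / m.factorial ≤ Real.exp (a + f) := by
  rw [Real.exp_add, ← Real.exp_one_pow]
  gcongr
  · exact Real.exp_one_gt_d9.le
  · exact Real.sum_le_exp_of_nonneg hf 8

theorem mul_log_log_lt_of_le {k a b : ℕ} {P f g n : ℝ} (hk : 0 < k) (hn : P ≤ n)
    (hf : 0 ≤ f) (hf' : f ≤ 1) (hg : 0 ≤ g)
    (hP : 2.7182818286 ^ a * (∑ m ∈ range 8, f ^ m / m.factorial +
      f ^ 8 * ((8 : ℕ) + 1) / ((8).factorial * (8 : ℕ))) ≤ P)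
    (ht : (k : ℝ) ≤ 1.3841 * (a + f)) (hbg : b + g ≤ 1.3841 * (a + f) / k)
    (hlt : a + f < 2.7182818283 ^ b * ∑ m ∈ range 8, g ^ m / m.factorial) :
    k * Real.log (Real.log n) < 1.3841 * Real.log n := by
  have hexp := ((exp_natCast_add_le hf hf').trans hP).trans hn
  refine mul_log_lt_of_lt_exp (by exact_mod_cast hk) ht
    ((Real.le_log_iff_exp_le ((Real.exp_pos _).trans_le hexp)).2 hexp) ?_
  exact hlt.trans_le ((le_exp_natCast_add hg).trans (Real.exp_le_exp.2 hbg))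

theorem mul_log_lt_of_le_three {k x : ℝ} (hk0 : 0 ≤ k) (hk : k ≤ 3) (hx : 0 < x) :
    k * Real.log x < 1.3841 * x := by
  have hlog := Real.log_le_log_add_div_sub_one (Real.exp_pos 1) hx
  rw [Real.log_exp] at hlog
  calc k * Real.log x ≤ k * (x / Real.exp 1) := by gcongr; linarith
    _ ≤ 3 * (x / Real.exp 1) := by gcongr
    _ = 3 / Real.exp 1 * x := by ring
    _ < 1.3841 * x := by
      gcongr
      rw [div_lt_iff₀ (Real.exp_pos 1)]
      linarith [Real.exp_one_gt_d9]

theorem omega_upper_bound (n : ℕ) (hn : 3 ≤ n) :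
    (n.primeFactors.card : ℝ) < 1.3841 * Real.log n / Real.log (Real.log n) := by
  have hn3 : (3 : ℝ) ≤ n := by exact_mod_cast hn
  have hlog : 1 < Real.log n := by
    rw [Real.lt_log_iff_exp_lt (by linarith)]
    linarith [Real.exp_one_lt_d9]
  rw [lt_div_iff₀ (Real.log_pos hlog)]
  have hprod := prod_nth_prime_le_of_card_primeFactors (show n ≠ 0 by omega)
  generalize n.primeFactors.card = k at hprod ⊢
  rcases le_or_gt 11 k with hk | hk
  · refine mul_log_lt_of_large hk ((mul_log_le_log_prod_nth_prime hk).trans ?_)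
    refine Real.log_le_log ?_ (by exact_mod_cast hprod)
    exact_mod_cast prod_pos fun i _ => (Nat.prime_nth_prime i).pos
  rcases le_or_gt k 3 with hk3 | hk3
  · exact mul_log_lt_of_le_three (by positivity) (by exact_mod_cast hk3) (by linarith)
  obtain ⟨h0, h1, h2, h3, h4, h5, h6, h7, h8, h9, -⟩ := nth_prime_small
  have hprod' : ((∏ i ∈ range k, Nat.nth Nat.Prime i : ℕ) : ℝ) ≤ n := by exact_mod_cast hprod
  interval_cases k <;>
    simp only [prod_range_succ, prod_range_zero, h0, h1, h2, h3, h4, h5, h6, h7, h8, h9] at hprod'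
  · apply mul_log_log_lt_of_le (a := 5) (f := 0) (b := 1) (g := 0.73) (by norm_num) hprod' <;>
      norm_num [sum_range_succ, Nat.factorial]
  · apply mul_log_log_lt_of_le (a := 7) (f := 0.5) (b := 2) (g := 0.07) (by norm_num) hprod' <;>
      norm_num [sum_range_succ, Nat.factorial]
  · apply mul_log_log_lt_of_le (a := 10) (f := 0.2) (b := 2) (g := 0.35) (by norm_num) hprod' <;>
      norm_num [sum_range_succ, Nat.factorial]
  · apply mul_log_log_lt_of_le (a := 13) (f := 0) (b := 2) (g := 0.57) (by norm_num) hprod' <;>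
      norm_num [sum_range_succ, Nat.factorial]
  · apply mul_log_log_lt_of_le (a := 16) (f := 0.06) (b := 2) (g := 0.7785) (by norm_num) hprod' <;>
      norm_num [sum_range_succ, Nat.factorial]
  · apply mul_log_log_lt_of_le (a := 19) (f := 0.2225) (b := 2) (g := 0.9562)
      (by norm_num) hprod' <;> norm_num [sum_range_succ, Nat.factorial]
  · apply mul_log_log_lt_of_le (a := 22) (f := 0.55) (b := 3) (g := 0.12) (by norm_num) hprod' <;>
      norm_num [sum_range_succ, Nat.factorial]
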